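/- (Necessity of supermodularity.) Let d ≥ 2. Let H : [0,∞) → ℝ be nonincreasing, not identically zero, and satisfy r^{d−1} H(r) → 0 as r → ∞. Let G : [0,∞)×[0,∞) → ℝ be Borel measurable with G(s,0) = G(0,t) = 0 for all s, t ≥ 0. If for all finitely supported u, v : ℤ^d → [0,∞) one has Σ_{x,y∈ℤ^d} G(u(x), v(y)) H(d(x,y)) ≤ Σ_{x,y∈ℤ^d} G(u*(x), v*(y)) H(d(x,y)), then G is supermodular. -/

import Mathlib

open Filter Topology

noncomputable section

abbrev ZLat (d : ℕ) := Fin d → ℤ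

def stdVec (d : ℕ) (i : Fin d) : Fin d → ℝ := fun j => if j = i then 1 else 0

/-- The set of directions E⃗ ⊆ ℝ^d. -/
def Evec (d : ℕ) : Set (Fin d → ℝ) :=
  {e | (∃ i, e = stdVec d i) ∨
    (∃ i j : Fin d, i < j ∧ e = fun k => (stdVec d i k + stdVec d j k) / 2) ∨
    (∃ i j : Fin d, i < j ∧ e = fun k => (stdVec d i k - stdVec d j k) / 2)}

/-- A fixed enumeration of E⃗ (for d = 2 it is e₁, e₂, (e₁+e₂)/2, (e₁-e₂)/2). -/
def EvecList (d : ℕ) : List (Fin d → ℝ) :=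
  ((List.finRange d).map (stdVec d)) ++
  ((List.finRange d).flatMap fun i => (List.finRange d).filterMap fun j =>
    if i < j then some (fun k => (stdVec d i k + stdVec d j k) / 2) else none) ++
  ((List.finRange d).flatMap fun i => (List.finRange d).filterMap fun j =>
    if i < j then some (fun k => (stdVec d i k - stdVec d j k) / 2) else none)

/-- The n-th largest value of `u`, counted with multiplicity (1-indexed). -/
def nthLargest {α : Type*} (u : α → NNReal) (n : ℕ) : NNReal :=
  sSup {t | ∃ Ω : Finset α, Ω.card = n ∧ ∀ x ∈ Ω, t ≤ u x}

/-- The 1-indexed position of the point with doubled coordinate `m` in the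
spiral order 0, 1, −1, 2, −2, … (for even m) resp. 1/2, −1/2, 3/2, −3/2, … (for odd m). -/
def posIdx (m : ℤ) : ℕ := (if 0 < m then m else 1 - m).toNat

/-- `x` and `y` lie on a common line with direction `e`. -/
def sameLine {d : ℕ} (e : Fin d → ℝ) (x y : ZLat d) : Prop :=
  ∃ c : ℝ, (fun i => (x i : ℝ) - (y i : ℝ)) = c • e

/-- Twice the inner product ⟨e, x⟩, as an integer. -/
def pairing {d : ℕ} (e : Fin d → ℝ) (x : ZLat d) : ℤ :=
  ⌊2 * ∑ i, e i * (x i : ℝ)⌋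

/-- One-step rearrangement `R_e`. -/
def stepR {d : ℕ} (e : Fin d → ℝ) (u : ZLat d → NNReal) : ZLat d → NNReal :=
  fun x => nthLargest (fun y : {y : ZLat d // sameLine e x y} => u y.1) (posIdx (pairing e x))

/-- `R^k u` : k successive one-step rearrangements cycling through the fixed enumeration. -/
def iterR (d : ℕ) (u : ZLat d → NNReal) : ℕ → ZLat d → NNReal
  | 0 => u
  | k + 1 => stepR ((EvecList d).getD (k % (EvecList d).length) 0) (iterR d u k)

/-- The Schwarz rearrangement on ℤ^d : pointwise limit of `R^k u`. -/
def RZd (d : ℕ) (u : ZLat d → NNReal) : ZLat d → NNReal :=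
  fun x => limUnder atTop fun k => iterR d u k x

def Admissible {α : Type*} (u : α → NNReal) : Prop :=
  ∀ t : NNReal, 0 < t → {x | t < u x}.Finite

def Equimeasurable {α : Type*} (u v : α → NNReal) : Prop :=
  ∀ t : NNReal, 0 < t → Nonempty ({x | t < u x} ≃ {x | t < v x})

/-- Graph distance (ℓ¹ distance) on the lattice ℤ^d. -/
def latDist {d : ℕ} (x y : ZLat d) : ℕ := ∑ i, (x i - y i).natAbs

/-- The i-th standard basis vector of ℤ^d. -/
def latE {d : ℕ} (i : Fin d) : ZLat d := fun j => if j = i then 1 else 0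

/-- ‖∇u‖_p^p : the p-Sobolev energy, summing over each edge {x, x+e_i} once. -/
def gradEnergy (d : ℕ) (p : ℝ) (u : ZLat d → NNReal) : ENNReal :=
  ∑' (x : ZLat d) (i : Fin d), ENNReal.ofReal (|(u (x + latE i) : ℝ) - (u x : ℝ)| ^ p)

/-- ‖∇u‖_p. -/
def gradNorm (d : ℕ) (p : ℝ) (u : ZLat d → NNReal) : ENNReal :=
  gradEnergy d p u ^ (1 / p)

/-- Graph automorphism of the lattice graph ℤ^d. -/
def IsLatAuto {d : ℕ} (σ : ZLat d ≃ ZLat d) : Prop :=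
  ∀ x y : ZLat d, latDist (σ x) (σ y) = 1 ↔ latDist x y = 1

def Supermodular (G : NNReal → NNReal → NNReal) : Prop :=
  ∀ s t s₀ t₀ : NNReal, G (s + s₀) t + G s (t + t₀) ≤ G (s + s₀) (t + t₀) + G s t

def StrictlySupermodular (G : NNReal → NNReal → NNReal) : Prop :=
  ∀ s t s₀ t₀ : NNReal, 0 < s₀ → 0 < t₀ →
    G (s + s₀) t + G s (t + t₀) < G (s + s₀) (t + t₀) + G s t

/-- The values of `u` are strictly decreasing: a₁ > a₂ > a₃ > ⋯ . -/
def StrictRan {α : Type*} (u : α → NNReal) : Prop :=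
  ∀ n : ℕ, 0 < n → nthLargest u (n + 1) < nthLargest u n


/-! Helper material. -/

lemma nthLargest_equiv {α β : Type*} (σ : α ≃ β) (u : β → NNReal) (n : ℕ) :
    nthLargest (fun x => u (σ x)) n = nthLargest u n := by
  unfold nthLargest
  congr 1
  ext t
  constructor
  · rintro ⟨Ω, hc, h⟩
    refine ⟨Ω.map σ.toEmbedding, by simpa using hc, ?_⟩
    intro x hx
    obtain ⟨y, hy, rfl⟩ := Finset.mem_map.1 hx
    exact h y hy
  · rintro ⟨Ω, hc, h⟩
    refine ⟨Ω.map σ.symm.toEmbedding, by simpa using hc, ?_⟩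
    intro x hx
    obtain ⟨y, hy, rfl⟩ := Finset.mem_map.1 hx
    simpa using h y hy

lemma nthLargest_sorted {α : Type*} (w : α → NNReal) (pos : α → ℕ)
    (hinj : Function.Injective pos) (hpos : ∀ x, 1 ≤ pos x)
    (hsurj : ∀ p, 1 ≤ p → ∃ x, pos x = p)
    (hanti : ∀ x y, pos x ≤ pos y → w y ≤ w x) (x : α) :
    nthLargest w (pos x) = w x := by
  unfold nthLargest
  apply IsGreatest.csSup_eq
  constructor
  · have : Nonempty α := ⟨x⟩
    choose! f hf using hsurj
    have hfin : Function.Injective (fun k : ℕ => f (k + 1)) := by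
      intro a b hab
      have h1 := hf (a + 1) (by omega)
      have h2 := hf (b + 1) (by omega)
      simp only at hab
      rw [hab] at h1
      omega
    refine ⟨(Finset.range (pos x)).map ⟨_, hfin⟩, by simp, ?_⟩
    intro y hy
    obtain ⟨k, hk, rfl⟩ := Finset.mem_map.1 hy
    apply hanti
    have := hf (k + 1) (by omega)
    simp only [Function.Embedding.coeFn_mk, this]
    have := Finset.mem_range.1 hk
    omega
  · rintro t ⟨Ω, hc, h⟩
    have : ∃ y ∈ Ω, pos x ≤ pos y := by
      by_contra! hcon
      have h1 : (Ω.map ⟨pos, hinj⟩) ⊆ Finset.Ico 1 (pos x) := by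
        intro p hp
        obtain ⟨y, hy, rfl⟩ := Finset.mem_map.1 hp
        simp only [Function.Embedding.coeFn_mk, Finset.mem_Ico]
        exact ⟨hpos y, hcon y hy⟩
      have h2 := Finset.card_le_card h1
      simp only [Finset.card_map, Nat.card_Ico] at h2
      have := hpos x
      omega
    obtain ⟨y, hy, hxy⟩ := this
    exact (h y hy).trans (hanti x y hxy)

/-- `g` is the integer direction belonging to `e`. -/
def GoodDir {d : ℕ} (e : Fin d → ℝ) (g : ZLat d) : Prop :=
  (∀ x y : ZLat d, sameLine e x y ↔ ∃ k : ℤ, y = x + k • g) ∧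
  (∀ (x : ZLat d) (k : ℤ), pairing e (x + k • g) = pairing e x + 2 * k) ∧
  pairing e 0 = 0

lemma posIdx_pos (m : ℤ) : 1 ≤ posIdx m := by unfold posIdx; split_ifs <;> omega

lemma posIdx_abs (m k l : ℤ) (h : posIdx (m + 2 * k) ≤ posIdx (m + 2 * l)) :
    |m + 2 * k| ≤ |m + 2 * l| := by
  unfold posIdx at h
  rw [Int.abs_eq_natAbs, Int.abs_eq_natAbs]
  split_ifs at h <;> omega

lemma stepR_sorted {d : ℕ} (e : Fin d → ℝ) (g : ZLat d) (hg : GoodDir e g)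
    (w : ZLat d → NNReal)
    (h : ∀ x y, sameLine e x y → posIdx (pairing e x) ≤ posIdx (pairing e y) → w y ≤ w x) :
    stepR e w = w := by
  obtain ⟨h1, h2, -⟩ := hg
  funext x
  unfold stepR
  have hx : sameLine e x x := (h1 x x).2 ⟨0, by simp⟩
  refine nthLargest_sorted (fun y : {y : ZLat d // sameLine e x y} => w y.1)
    (fun y => posIdx (pairing e y.1)) ?_ (fun _ => posIdx_pos _) ?_ ?_ ⟨x, hx⟩
  · rintro ⟨y, hy⟩ ⟨z, hz⟩ hyz
    obtain ⟨k, rfl⟩ := (h1 _ _).1 hy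
    obtain ⟨l, rfl⟩ := (h1 _ _).1 hz
    simp only [h2] at hyz
    have : k = l := by
      unfold posIdx at hyz
      split_ifs at hyz <;> omega
    simp [this]
  · intro p hp
    have : ∃ k : ℤ, posIdx (pairing e x + 2 * k) = p := by
      rcases Int.emod_two_eq_zero_or_one (pairing e x - p) with hh | hh
      · refine ⟨(p - pairing e x) / 2, ?_⟩
        have : pairing e x + 2 * ((p - pairing e x) / 2) = p := by omega
        rw [this]; unfold posIdx; split_ifs <;> omega
      · refine ⟨(1 - p - pairing e x) / 2, ?_⟩
        have : pairing e x + 2 * ((1 - p - pairing e x) / 2) = 1 - p := by omega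
        rw [this]; unfold posIdx; split_ifs <;> omega
    obtain ⟨k, hk⟩ := this
    exact ⟨⟨x + k • g, (h1 _ _).2 ⟨k, rfl⟩⟩, by simpa only [h2] using hk⟩
  · rintro ⟨y, hy⟩ ⟨z, hz⟩ hyz
    refine h y z ?_ hyz
    obtain ⟨k, rfl⟩ := (h1 _ _).1 hy
    obtain ⟨l, rfl⟩ := (h1 _ _).1 hz
    exact (h1 _ _).2 ⟨l - k, by rw [sub_smul]; abel⟩

/-- The box `[-R, R]^d`. -/
def box (d R : ℕ) : Finset (ZLat d) := Fintype.piFinset fun _ => Finset.Icc (-(R : ℤ)) R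

lemma mem_box {d R : ℕ} (x : ZLat d) : x ∈ box d R ↔ ∀ i, |x i| ≤ R := by
  simp [box, abs_le]

/-- The function `a 1_box + b 1_q`. -/
def wfun (d R : ℕ) (a b : NNReal) (q : ZLat d) : ZLat d → NNReal :=
  fun x => if x = q then a + b else if x ∈ box d R then a else 0

lemma wfun_sorted {d : ℕ} (R : ℕ) (a b : NNReal) (e : Fin d → ℝ) (g : ZLat d)
    (hg : GoodDir e g)
    (hb : ∀ x y, sameLine e x y → |pairing e x| ≤ |pairing e y| → y ∈ box d R → x ∈ box d R) :
    stepR e (wfun d R a b 0) = wfun d R a b 0 := by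
  apply stepR_sorted e g hg
  intro x y hxy hp
  obtain ⟨h1, h2, h3⟩ := hg
  obtain ⟨k, hk⟩ := (h1 _ _).1 hxy
  have habs : |pairing e x| ≤ |pairing e y| := by
    have := posIdx_abs (pairing e x) 0 k
    rw [hk, h2] at hp ⊢
    simpa using this (by simpa using hp)
  unfold wfun
  by_cases hy : y = 0
  · have hpe : pairing e y = 0 := by rw [hy, h3]
    rw [hpe] at hp habs
    have hk0 : k = 0 := by
      have h4 := h2 x k
      rw [← hk, hpe] at h4
      have : pairing e x = 0 := by simpa using habs
      omega
    have : x = 0 := by rw [← hy, hk, hk0]; simp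
    simp [this, hy]
  · by_cases hyb : y ∈ box d R
    · have := hb x y hxy habs hyb
      by_cases hx : x = 0 <;> simp [hx, hy, hyb, this]
    · simp [hy, hyb]

lemma stdVec_sum {d : ℕ} (i : Fin d) (x : ZLat d) : ∑ k, stdVec d i k * (x k : ℝ) = x i := by
  simp [stdVec]

lemma pairing_std {d : ℕ} (i : Fin d) (x : ZLat d) : pairing (stdVec d i) x = 2 * x i := by
  unfold pairing
  rw [stdVec_sum]
  exact_mod_cast Int.floor_intCast (R := ℝ) (2 * x i)

lemma pairing_add {d : ℕ} (i j : Fin d) (x : ZLat d) :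
    pairing (fun k => (stdVec d i k + stdVec d j k) / 2) x = x i + x j := by
  unfold pairing
  have : 2 * ∑ k, (stdVec d i k + stdVec d j k) / 2 * (x k : ℝ) = ((x i + x j : ℤ) : ℝ) := by
    rw [Finset.mul_sum]
    push_cast
    rw [← stdVec_sum i, ← stdVec_sum j, ← Finset.sum_add_distrib]
    exact Finset.sum_congr rfl fun _ _ => by ring
  rw [this, Int.floor_intCast]

lemma pairing_sub {d : ℕ} (i j : Fin d) (x : ZLat d) :
    pairing (fun k => (stdVec d i k - stdVec d j k) / 2) x = x i - x j := by
  unfold pairing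
  have : 2 * ∑ k, (stdVec d i k - stdVec d j k) / 2 * (x k : ℝ) = ((x i - x j : ℤ) : ℝ) := by
    rw [Finset.mul_sum]
    push_cast
    rw [← stdVec_sum i, ← stdVec_sum j, ← Finset.sum_sub_distrib]
    exact Finset.sum_congr rfl fun _ _ => by ring
  rw [this, Int.floor_intCast]

lemma good_std {d : ℕ} (i : Fin d) : GoodDir (stdVec d i) (latE i) := by
  refine ⟨fun x y => ⟨?_, ?_⟩, ?_, ?_⟩
  · rintro ⟨c, hc⟩
    refine ⟨y i - x i, ?_⟩
    funext k
    have hk := congrFun hc k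
    by_cases h : k = i
    · subst h; simp [latE]
    · simp [stdVec, h] at hk
      have : x k = y k := by exact_mod_cast (sub_eq_zero.1 hk)
      simp [latE, h, this]
  · rintro ⟨k, rfl⟩
    refine ⟨-k, ?_⟩
    funext l
    by_cases h : l = i <;> simp [stdVec, latE, h]
  · intro x k
    rw [pairing_std, pairing_std]
    simp [latE]; ring
  · simp [pairing_std]

lemma good_add {d : ℕ} (i j : Fin d) (hij : i ≠ j) :
    GoodDir (fun k => (stdVec d i k + stdVec d j k) / 2) (latE i + latE j) := by
  refine ⟨fun x y => ⟨?_, ?_⟩, ?_, ?_⟩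
  · rintro ⟨c, hc⟩
    refine ⟨y i - x i, ?_⟩
    have hi := congrFun hc i
    have hj := congrFun hc j
    simp [stdVec, hij, hij.symm] at hi hj
    have hh : x i - y i = x j - y j := by
      have : (x i : ℝ) - y i = x j - y j := by rw [hi, hj]
      exact_mod_cast this
    funext k
    have hk := congrFun hc k
    by_cases h : k = i
    · subst h; simp [latE, hij]
    · by_cases h' : k = j
      · subst h'; simp [latE, h]; omega
      · simp [stdVec, h, h'] at hk
        have : x k = y k := by exact_mod_cast (sub_eq_zero.1 hk)
        simp [latE, h, h', this]
  · rintro ⟨k, rfl⟩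
    refine ⟨-(2 * k), ?_⟩
    funext l
    by_cases h : l = i
    · subst h; simp [stdVec, latE, hij]; ring
    · by_cases h' : l = j
      · subst h'; simp [stdVec, latE, h]; ring
      · simp [stdVec, latE, h, h']
  · intro x k
    rw [pairing_add, pairing_add]
    simp [latE, hij, hij.symm]; ring
  · simp [pairing_add]

lemma good_sub {d : ℕ} (i j : Fin d) (hij : i ≠ j) :
    GoodDir (fun k => (stdVec d i k - stdVec d j k) / 2) (latE i - latE j) := by
  refine ⟨fun x y => ⟨?_, ?_⟩, ?_, ?_⟩
  · rintro ⟨c, hc⟩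
    refine ⟨y i - x i, ?_⟩
    have hi := congrFun hc i
    have hj := congrFun hc j
    simp [stdVec, hij, hij.symm] at hi hj
    have hh : x i - y i = -(x j - y j) := by
      have : (x i : ℝ) - y i = -(x j - y j) := by rw [hi, hj]; ring
      exact_mod_cast this
    funext k
    have hk := congrFun hc k
    by_cases h : k = i
    · subst h; simp [latE, hij]
    · by_cases h' : k = j
      · subst h'; simp [latE, h]; omega
      · simp [stdVec, h, h'] at hk
        have : x k = y k := by exact_mod_cast (sub_eq_zero.1 hk)
        simp [latE, h, h', this]
  · rintro ⟨k, rfl⟩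
    refine ⟨-(2 * k), ?_⟩
    funext l
    by_cases h : l = i
    · subst h; simp [stdVec, latE, hij]; ring
    · by_cases h' : l = j
      · subst h'; simp [stdVec, latE, h]; ring
      · simp [stdVec, latE, h, h']
  · intro x k
    rw [pairing_sub, pairing_sub]
    simp [latE, hij, hij.symm]; ring
  · simp [pairing_sub]

lemma fix_std {d : ℕ} (R : ℕ) (a b : NNReal) (i : Fin d) :
    stepR (stdVec d i) (wfun d R a b 0) = wfun d R a b 0 := by
  apply wfun_sorted R a b _ _ (good_std i)
  intro x y hxy hp hy
  rw [mem_box] at hy ⊢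
  rw [pairing_std, pairing_std] at hp
  obtain ⟨k, rfl⟩ := ((good_std i).1 x y).1 hxy
  intro l
  have hl := hy l
  by_cases h : l = i
  · subst h
    rw [abs_mul, abs_mul] at hp
    simp only [abs_two] at hp
    omega
  · simpa [latE, h] using hl

lemma fix_add {d : ℕ} (R : ℕ) (a b : NNReal) (i j : Fin d) (hij : i ≠ j) :
    stepR (fun k => (stdVec d i k + stdVec d j k) / 2) (wfun d R a b 0) = wfun d R a b 0 := by
  apply wfun_sorted R a b _ _ (good_add i j hij)
  intro x y hxy hp hy
  rw [mem_box] at hy ⊢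
  rw [pairing_add, pairing_add] at hp
  obtain ⟨k, rfl⟩ := ((good_add i j hij).1 x y).1 hxy
  have hi := hy i
  have hj := hy j
  simp only [latE, Pi.add_apply, Pi.smul_apply, smul_eq_mul, if_true, if_neg hij,
    if_neg hij.symm, mul_one, mul_zero, add_zero, zero_add, Int.abs_eq_natAbs] at hi hj hp
  intro l
  have hl := hy l
  by_cases h : l = i
  · subst h
    rw [Int.abs_eq_natAbs]; omega
  · by_cases h' : l = j
    · subst h'
      rw [Int.abs_eq_natAbs]; omega
    · simpa [latE, h, h'] using hl

lemma fix_sub {d : ℕ} (R : ℕ) (a b : NNReal) (i j : Fin d) (hij : i ≠ j) :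
    stepR (fun k => (stdVec d i k - stdVec d j k) / 2) (wfun d R a b 0) = wfun d R a b 0 := by
  apply wfun_sorted R a b _ _ (good_sub i j hij)
  intro x y hxy hp hy
  rw [mem_box] at hy ⊢
  rw [pairing_sub, pairing_sub] at hp
  obtain ⟨k, rfl⟩ := ((good_sub i j hij).1 x y).1 hxy
  have hi := hy i
  have hj := hy j
  simp only [latE, Pi.add_apply, Pi.sub_apply, Pi.smul_apply, smul_eq_mul, if_true, if_neg hij,
    if_neg hij.symm, mul_one, mul_zero, add_zero, zero_add, sub_zero, zero_sub, Int.abs_eq_natAbs] at hi hj hp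
  intro l
  have hl := hy l
  by_cases h : l = i
  · subst h
    rw [Int.abs_eq_natAbs]; omega
  · by_cases h' : l = j
    · subst h'
      rw [Int.abs_eq_natAbs]; omega
    · simpa [latE, h, h'] using hl

lemma evec_fix {d : ℕ} (R : ℕ) (a b : NNReal) (e : Fin d → ℝ) (he : e ∈ EvecList d) :
    stepR e (wfun d R a b 0) = wfun d R a b 0 := by
  unfold EvecList at he
  simp only [List.mem_append, List.mem_map, List.mem_flatMap, List.mem_filterMap,
    List.mem_finRange, true_and] at he
  rcases he with (⟨i, rfl⟩ | ⟨i, j, h⟩) | ⟨i, j, h⟩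
  · exact fix_std R a b i
  · split_ifs at h with hij
    obtain rfl := Option.some.inj h
    exact fix_add R a b i j hij.ne
  · split_ifs at h with hij
    obtain rfl := Option.some.inj h
    exact fix_sub R a b i j hij.ne

lemma evec_getD {d : ℕ} (hd : 0 < d) (k : ℕ) :
    (EvecList d).getD (k % (EvecList d).length) 0 ∈ EvecList d := by
  have hlen : 0 < (EvecList d).length := by simp [EvecList]; omega
  have := Nat.mod_lt k hlen
  rw [List.getD_eq_getElem _ _ this]
  exact List.getElem_mem _

lemma evec_getD_zero {d : ℕ} (hd : 0 < d) :
    (EvecList d).getD (0 % (EvecList d).length) 0 = stdVec d ⟨0, hd⟩ := by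
  obtain ⟨m, rfl⟩ : ∃ m, d = m + 1 := ⟨d - 1, by omega⟩
  rw [Nat.zero_mod]
  unfold EvecList
  rw [List.finRange_succ]
  rfl

lemma zero_mem_box (d R : ℕ) : (0 : ZLat d) ∈ box d R := by simp [mem_box]

lemma swap_step {d : ℕ} (R n : ℕ) (a b : NNReal) (i : Fin d) (q : ZLat d)
    (hq : q = (n : ℤ) • latE i) (hqb : q ∈ box d R) :
    stepR (stdVec d i) (wfun d R a b q) = wfun d R a b 0 := by
  rw [← fix_std R a b i]
  have hw : ∀ y, wfun d R a b q y = wfun d R a b 0 (Equiv.swap 0 q y) := by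
    intro y
    have h0 := zero_mem_box d R
    unfold wfun
    by_cases hy : y = q
    · subst hy; simp
    · by_cases hy0 : y = 0
      · subst hy0
        simp [hy, hqb, h0, Ne.symm hy]
      · rw [Equiv.swap_apply_of_ne_of_ne hy0 hy]
        simp [hy, hy0]
  funext x
  have h1 := (good_std i).1 x
  have hl : sameLine (stdVec d i) x q ↔ sameLine (stdVec d i) x 0 := by
    rw [h1, h1]
    constructor
    · rintro ⟨k, hk⟩
      exact ⟨k - n, by rw [sub_smul, ← hq, hk]; abel⟩
    · rintro ⟨k, hk⟩
      exact ⟨k + n, by rw [add_smul, ← hq, ← add_assoc, ← hk, zero_add]⟩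
  have hs : ∀ y, sameLine (stdVec d i) x y ↔ sameLine (stdVec d i) x (Equiv.swap 0 q y) := by
    intro y
    by_cases hy : y = q
    · subst hy; simp [hl]
    · by_cases hy0 : y = 0
      · subst hy0; simp [hl]
      · rw [Equiv.swap_apply_of_ne_of_ne hy0 hy]
  unfold stepR
  have := nthLargest_equiv ((Equiv.swap 0 q).subtypeEquiv hs)
    (fun y : {y : ZLat d // sameLine (stdVec d i) x y} => wfun d R a b 0 y.1)
    (posIdx (pairing (stdVec d i) x))
  rw [← this]
  congr 1
  funext y
  rw [hw]
  rfl

lemma RZd_wfun {d : ℕ} (hd : 0 < d) (R n : ℕ) (a b : NNReal) (q : ZLat d)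
    (hq : q = (n : ℤ) • latE ⟨0, hd⟩) (hqb : q ∈ box d R) :
    RZd d (wfun d R a b q) = wfun d R a b 0 := by
  have hk : ∀ k, iterR d (wfun d R a b q) (k + 1) = wfun d R a b 0 := by
    intro k
    induction k with
    | zero =>
      show stepR ((EvecList d).getD (0 % (EvecList d).length) 0) (wfun d R a b q) = _
      rw [evec_getD_zero hd]
      exact swap_step R n a b _ q hq hqb
    | succ k ih =>
      show stepR _ (iterR d (wfun d R a b q) (k + 1)) = _
      rw [ih]
      exact evec_fix R a b _ (evec_getD hd _)
  funext x
  unfold RZd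
  apply Tendsto.limUnder_eq
  apply tendsto_const_nhds.congr'
  filter_upwards [eventually_ge_atTop 1] with k hk1
  obtain ⟨m, rfl⟩ : ∃ m, k = m + 1 := ⟨k - 1, by omega⟩
  rw [hk]

lemma wfun_support {d R : ℕ} (a b : NNReal) (q : ZLat d) (hq : q ∈ box d R) (x : ZLat d)
    (hx : x ∉ box d R) : wfun d R a b q x = 0 := by
  have : x ≠ q := fun h => hx (h ▸ hq)
  simp [wfun, this, hx]

lemma wfun_support_finite {d R : ℕ} (a b : NNReal) (q : ZLat d) (hq : q ∈ box d R) :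
    (Function.support (wfun d R a b q)).Finite := by
  apply (box d R).finite_toSet.subset
  intro x hx
  by_contra h
  exact hx (wfun_support a b q hq x h)

lemma energy_formula {d R : ℕ} (H : ℝ → ℝ) (G : ℝ → ℝ → ℝ)
    (hG0 : ∀ s t : ℝ, 0 ≤ s → 0 ≤ t → G s 0 = 0 ∧ G 0 t = 0)
    (s s₀ t t₀ : NNReal) (q : ZLat d) (hq : q ∈ box d R) :
    (∑ᶠ x : ZLat d, ∑ᶠ y : ZLat d,
      G (wfun d R s s₀ 0 x) (wfun d R t t₀ q y) * H (latDist x y)) =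
    G s t * (∑ x ∈ box d R, ∑ y ∈ box d R, H (latDist x y))
      + (G (s + s₀) t - G s t) * (∑ y ∈ box d R, H (latDist 0 y))
      + (G s (t + t₀) - G s t) * (∑ x ∈ box d R, H (latDist x q))
      + (G (s + s₀) (t + t₀) + G s t - G (s + s₀) t - G s (t + t₀)) * H (latDist 0 q) := by
  have h0 := zero_mem_box d R
  have hin : ∀ x, (∑ᶠ y : ZLat d, G (wfun d R s s₀ 0 x) (wfun d R t t₀ q y) * H (latDist x y))
      = ∑ y ∈ box d R, G (wfun d R s s₀ 0 x) (wfun d R t t₀ q y) * H (latDist x y) := by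
    intro x
    apply finsum_eq_sum_of_support_subset
    intro y hy
    by_contra h
    apply hy
    simp only
    rw [wfun_support t t₀ q hq y h, NNReal.coe_zero,
      (hG0 _ 0 (NNReal.coe_nonneg _) le_rfl).1, zero_mul]
  rw [finsum_congr hin, finsum_eq_sum_of_support_subset (s := box d R)]
  · have hterm : ∀ x ∈ box d R, ∀ y ∈ box d R,
        G (wfun d R s s₀ 0 x) (wfun d R t t₀ q y) * H (latDist x y) =
        G s t * H (latDist x y)
        + (if x = 0 then (G (s + s₀) t - G s t) * H (latDist 0 y) else 0)
        + (if y = q then (G s (t + t₀) - G s t) * H (latDist x q) else 0)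
        + (if x = 0 then (if y = q then
          (G (s + s₀) (t + t₀) + G s t - G (s + s₀) t - G s (t + t₀)) * H (latDist 0 q)
            else 0) else 0) := by
      intro x hx y hy
      unfold wfun
      by_cases hx0 : x = 0 <;> by_cases hyq : y = q
      · simp [hx0, hyq]; ring
      · simp [hx0, hyq, hy]; ring
      · simp [hx0, hyq, hx]; ring
      · simp [hx0, hyq, hx, hy]
    rw [Finset.sum_congr rfl fun x hx => Finset.sum_congr rfl (hterm x hx)]
    simp only [Finset.sum_add_distrib, ← Finset.mul_sum]
    congr 1
    · congr 1
      · congr 1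
        rw [Finset.sum_eq_single_of_mem 0 h0]
        · simp [Finset.mul_sum]
        · intro b _ hb; simp [hb]
      · simp [hq, Finset.mul_sum]
    · rw [Finset.sum_eq_single_of_mem 0 h0]
      · simp [hq]
      · intro b _ hb; simp [hb]
  · intro x hx
    by_contra h
    apply hx
    simp only
    apply Finset.sum_eq_zero
    intro y _
    rw [wfun_support s s₀ 0 h0 x h, NNReal.coe_zero,
      (hG0 0 _ le_rfl (NNReal.coe_nonneg _)).2, zero_mul]

lemma latDist_ge {d : ℕ} (z : ZLat d) (i : Fin d) : (z i).natAbs ≤ latDist z 0 := by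
  unfold latDist
  have := Finset.single_le_sum (f := fun i => (z i - (0 : ZLat d) i).natAbs)
    (fun _ _ => Nat.zero_le _) (Finset.mem_univ i)
  simpa using this

lemma sum_diff_bound {d : ℕ} (hd : 0 < d) (H : ℝ → ℝ)
    (hmono : ∀ a b : ℝ, 0 ≤ a → a ≤ b → H b ≤ H a) (hnn : ∀ a, 0 ≤ a → 0 ≤ H a)
    (n r : ℕ) (q : ZLat d) (hq : q = (n : ℤ) • latE ⟨0, hd⟩) :
    |(∑ x ∈ box d (r + n), H (latDist x 0)) - ∑ x ∈ box d (r + n), H (latDist x q)|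
      ≤ (n * (2 * (r + n) + 1) ^ (d - 1)) * H r := by
  have hq0 : q ⟨0, hd⟩ = n := by simp [hq, latE]
  have hqi : ∀ i, i ≠ ⟨0, hd⟩ → q i = 0 := by intro i hi; simp [hq, latE, hi]
  set A := box d (r + n) with hA
  set B := A.map (Equiv.subRight q).toEmbedding with hB
  have hsum : ∑ x ∈ A, H (latDist x q) = ∑ z ∈ B, H (latDist z 0) := by
    rw [hB, Finset.sum_map]
    apply Finset.sum_congr rfl
    intro x _
    simp [latDist]
  have hmB : ∀ z, z ∈ B ↔ z + q ∈ A := by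
    intro z
    rw [hB, Finset.mem_map]
    constructor
    · rintro ⟨x, hx, rfl⟩; simpa using hx
    · intro h; exact ⟨z + q, h, by simp⟩
  rw [hsum, ← Finset.sum_sdiff_sub_sum_sdiff]
  have hcard : (A \ B).card ≤ n * (2 * (r + n) + 1) ^ (d - 1) := by
    have hsub : A \ B ⊆ Fintype.piFinset (fun i : Fin d => if i = ⟨0, hd⟩
        then Finset.Icc ((r : ℤ) + 1) (r + n) else Finset.Icc (-((r + n : ℕ) : ℤ)) (r + n : ℕ)) := by
      intro z hz
      rw [Finset.mem_sdiff, hmB, hA, mem_box, mem_box] at hz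
      obtain ⟨hz1, hz2⟩ := hz
      rw [Fintype.mem_piFinset]
      push Not at hz2
      obtain ⟨j, hj⟩ := hz2
      have hj0 : j = ⟨0, hd⟩ := by
        by_contra h
        have := hz1 j
        rw [Pi.add_apply, hqi j h, add_zero] at hj
        omega
      subst hj0
      rw [Pi.add_apply, hq0] at hj
      intro i
      have := hz1 i
      rw [abs_le] at this
      split_ifs with hi
      · subst hi
        rw [lt_abs] at hj
        rw [Finset.mem_Icc]
        push_cast at *
        omega
      · rw [Finset.mem_Icc]; exact this
    refine (Finset.card_le_card hsub).trans (le_of_eq ?_)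
    rw [Fintype.card_piFinset]
    obtain ⟨m, rfl⟩ : ∃ m, d = m + 1 := ⟨d - 1, by omega⟩
    rw [Fin.prod_univ_succ]
    have e0 : (⟨0, hd⟩ : Fin (m + 1)) = 0 := rfl
    simp only [e0, if_true, Fin.succ_ne_zero, if_false, Finset.prod_const, Int.card_Icc,
      Finset.card_univ, Fintype.card_fin, Nat.add_sub_cancel]
    congr 1
    · omega
    · congr 1; omega
  have hcard2 : (B \ A).card ≤ n * (2 * (r + n) + 1) ^ (d - 1) := by
    have : B.card = A.card := by rw [hB, Finset.card_map]
    rw [Finset.card_sdiff_comm this]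
    exact hcard
  have hbd : ∀ z, z ∈ A \ B ∨ z ∈ B \ A → H (latDist z 0) ≤ H r := by
    intro z hz
    apply hmono _ _ (Nat.cast_nonneg _)
    have : r ≤ latDist z 0 := by
      refine le_trans ?_ (latDist_ge z ⟨0, hd⟩)
      rcases hz with hz | hz
      all_goals
        rw [Finset.mem_sdiff, hmB, hA, mem_box, mem_box] at hz
        obtain ⟨hz1, hz2⟩ := hz
        push Not at hz2
        obtain ⟨j, hj⟩ := hz2
        have h1 := hz1 j
        rw [Pi.add_apply] at *
        have hj0 : j = ⟨0, hd⟩ := by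
          by_contra h
          rw [hqi j h, add_zero] at *
          omega
        subst hj0
        rw [hq0] at *
        rw [Int.abs_eq_natAbs] at h1 hj
        omega
    exact_mod_cast this
  have key : ∀ S : Finset (ZLat d), S.card ≤ n * (2 * (r + n) + 1) ^ (d - 1) →
      (∀ z ∈ S, H (latDist z 0) ≤ H r) →
      0 ≤ ∑ z ∈ S, H (latDist z 0) ∧
      ∑ z ∈ S, H (latDist z 0) ≤ (n * (2 * (r + n) + 1) ^ (d - 1)) * H r := by
    intro S hS hz
    refine ⟨Finset.sum_nonneg fun z _ => hnn _ (Nat.cast_nonneg _), ?_⟩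
    refine (Finset.sum_le_card_nsmul _ _ _ hz).trans ?_
    rw [nsmul_eq_mul]
    apply mul_le_mul_of_nonneg_right _ (hnn _ (Nat.cast_nonneg _))
    exact_mod_cast hS
  have k1 := key _ hcard fun z hz => hbd z (Or.inl hz)
  have k2 := key _ hcard2 fun z hz => hbd z (Or.inr hz)
  rw [abs_le]
  constructor <;> linarith [k1.1, k1.2, k2.1, k2.2]

lemma H_nonneg {d : ℕ} (hd : 2 ≤ d) (H : ℝ → ℝ)
    (hmono : ∀ a b : ℝ, 0 ≤ a → a ≤ b → H b ≤ H a)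
    (hlim : Tendsto (fun r : ℝ => r ^ (d - 1) * H r) atTop (𝓝 0)) :
    ∀ a, 0 ≤ a → 0 ≤ H a := by
  intro a ha
  by_contra! hneg
  have h1 : ∀ᶠ r : ℝ in atTop, H a < r ^ (d - 1) * H r := hlim.eventually (lt_mem_nhds hneg)
  obtain ⟨r, hr, hra, hr1⟩ :=
    (h1.and ((eventually_ge_atTop a).and (eventually_ge_atTop 1))).exists
  have h2 := hmono a r ha hra
  have h3 : (1 : ℝ) ≤ r ^ (d - 1) := one_le_pow₀ hr1
  nlinarith

lemma H_drop {d : ℕ} (hd : 2 ≤ d) (H : ℝ → ℝ)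
    (hmono : ∀ a b : ℝ, 0 ≤ a → a ≤ b → H b ≤ H a)
    (hne : ∃ r : ℝ, 0 ≤ r ∧ H r ≠ 0)
    (hlim : Tendsto (fun r : ℝ => r ^ (d - 1) * H r) atTop (𝓝 0)) :
    ∃ n : ℕ, H n < H 0 := by
  have hnn := H_nonneg hd H hmono hlim
  obtain ⟨r, hr, hr0⟩ := hne
  have hpos : 0 < H 0 := lt_of_lt_of_le (lt_of_le_of_ne (hnn r hr) (Ne.symm hr0))
    (hmono 0 r le_rfl hr)
  have h1 := (hlim.comp tendsto_natCast_atTop_atTop).eventually (gt_mem_nhds hpos)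
  obtain ⟨n, hn, hn1⟩ := (h1.and (eventually_ge_atTop 1)).exists
  refine ⟨n, lt_of_le_of_lt ?_ hn⟩
  have h3 : (1 : ℝ) ≤ (n : ℝ) ^ (d - 1) := one_le_pow₀ (by exact_mod_cast hn1)
  have := hnn n (Nat.cast_nonneg _)
  simp only [Function.comp]
  nlinarith

lemma latDist_comm' {d : ℕ} (x y : ZLat d) : latDist x y = latDist y x := by
  unfold latDist
  exact Finset.sum_congr rfl fun i _ => by omega

lemma main_nn (d : ℕ) (hd : 2 ≤ d) (H : ℝ → ℝ)
    (hmono : ∀ a b : ℝ, 0 ≤ a → a ≤ b → H b ≤ H a)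
    (hne : ∃ r : ℝ, 0 ≤ r ∧ H r ≠ 0)
    (hlim : Tendsto (fun r : ℝ => r ^ (d - 1) * H r) atTop (𝓝 0))
    (G : ℝ → ℝ → ℝ)
    (hG0 : ∀ s t : ℝ, 0 ≤ s → 0 ≤ t → G s 0 = 0 ∧ G 0 t = 0)
    (hineq : ∀ u v : ZLat d → NNReal,
      (Function.support u).Finite → (Function.support v).Finite →
      (∑ᶠ x : ZLat d, ∑ᶠ y : ZLat d, G (u x) (v y) * H (latDist x y)) ≤
      ∑ᶠ x : ZLat d, ∑ᶠ y : ZLat d, G (RZd d u x) (RZd d v y) * H (latDist x y))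
    (s t s₀ t₀ : NNReal) :
      G (s + s₀) t + G s (t + t₀) ≤ G (s + s₀) (t + t₀) + G s t := by
  have hd0 : 0 < d := by omega
  have hnn := H_nonneg hd H hmono hlim
  obtain ⟨n, hn⟩ := H_drop hd H hmono hne hlim
  set q : ZLat d := (n : ℤ) • latE ⟨0, hd0⟩ with hq
  have hqd : latDist 0 q = n := by
    unfold latDist
    rw [Finset.sum_eq_single_of_mem ⟨0, hd0⟩ (Finset.mem_univ _)]
    · simp [hq, latE]
    · intro b _ hb; simp [hq, latE, hb]
  set D := G (s + s₀) (t + t₀) + G s t - G (s + s₀) t - G s (t + t₀) with hD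
  set g := G s (t + t₀) - G s t with hg
  have hstep : ∀ r : ℕ, 0 ≤ |g| * ((n * (2 * (r + n) + 1) ^ (d - 1)) * H r) + D * (H 0 - H n) := by
    intro r
    have hqb : q ∈ box d (r + n) := by
      rw [mem_box]
      intro i
      by_cases hi : i = ⟨0, hd0⟩
      · simp [hq, latE, hi]
      · simp [hq, latE, hi]; positivity
    have h0b := zero_mem_box d (r + n)
    have h := hineq (wfun d (r + n) s s₀ 0) (wfun d (r + n) t t₀ q)
      (wfun_support_finite _ _ _ h0b) (wfun_support_finite _ _ _ hqb)
    rw [RZd_wfun hd0 (r + n) n t t₀ q hq hqb,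
      RZd_wfun hd0 (r + n) 0 s s₀ 0 (by simp) h0b,
      energy_formula H G hG0 s s₀ t t₀ q hqb, energy_formula H G hG0 s s₀ t t₀ 0 h0b, hqd] at h
    have h00 : latDist (0 : ZLat d) 0 = 0 := by simp [latDist]
    rw [h00, Nat.cast_zero, ← hD, ← hg] at h
    have hb := sum_diff_bound hd0 H hmono hnn n r q hq
    have hab := mul_le_mul_of_nonneg_left hb (abs_nonneg g)
    rw [← abs_mul] at hab
    have := (le_abs_self _).trans hab
    linarith
  have hlim2 : Tendsto (fun r : ℕ => (|g| * (n * (2 * n + 3) ^ (d - 1))) *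
      ((r : ℝ) ^ (d - 1) * H r) + D * (H 0 - H n)) atTop (𝓝 (D * (H 0 - H n))) := by
    have := ((hlim.comp tendsto_natCast_atTop_atTop).const_mul
      (|g| * (n * (2 * n + 3) ^ (d - 1)))).add_const (D * (H 0 - H n))
    simpa using this
  have hfin : 0 ≤ D * (H 0 - H n) := by
    apply ge_of_tendsto hlim2
    filter_upwards [eventually_ge_atTop 1] with r hr
    refine (hstep r).trans ?_
    have hHr := hnn r (Nat.cast_nonneg _)
    have hr' : (1 : ℝ) ≤ r := by exact_mod_cast hr
    have h1 : (2 * ((r : ℝ) + n) + 1) ^ (d - 1) ≤ (2 * n + 3) ^ (d - 1) * (r : ℝ) ^ (d - 1) := by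
      rw [← mul_pow]
      apply pow_le_pow_left₀ (by positivity)
      have : (0 : ℝ) ≤ n := Nat.cast_nonneg _
      nlinarith
    have h2 : |g| * ((n * (2 * ((r : ℝ) + n) + 1) ^ (d - 1)) * H r) ≤
        |g| * ((n * ((2 * n + 3) ^ (d - 1) * (r : ℝ) ^ (d - 1))) * H r) := by gcongr
    linarith
  have : 0 ≤ D := nonneg_of_mul_nonneg_left hfin (by linarith)
  linarith

/-- Necessity of supermodularity: if the discrete Riesz inequality holds for all
finitely supported u, v on ℤ^d, then G must be supermodular on [0,∞)². -/
theorem stmt12 (d : ℕ) (hd : 2 ≤ d) (H : ℝ → ℝ)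
    (hmono : ∀ a b : ℝ, 0 ≤ a → a ≤ b → H b ≤ H a)
    (hne : ∃ r : ℝ, 0 ≤ r ∧ H r ≠ 0)
    (hlim : Tendsto (fun r : ℝ => r ^ (d - 1) * H r) atTop (𝓝 0))
    (G : ℝ → ℝ → ℝ) (hmeas : Measurable fun p : ℝ × ℝ => G p.1 p.2)
    (hG0 : ∀ s t : ℝ, 0 ≤ s → 0 ≤ t → G s 0 = 0 ∧ G 0 t = 0)
    (hineq : ∀ u v : ZLat d → NNReal,
      (Function.support u).Finite → (Function.support v).Finite →
      (∑ᶠ x : ZLat d, ∑ᶠ y : ZLat d, G (u x) (v y) * H (latDist x y)) ≤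
      ∑ᶠ x : ZLat d, ∑ᶠ y : ZLat d, G (RZd d u x) (RZd d v y) * H (latDist x y)) :
    ∀ s t s₀ t₀ : ℝ, 0 ≤ s → 0 ≤ t → 0 ≤ s₀ → 0 ≤ t₀ →
      G (s + s₀) t + G s (t + t₀) ≤ G (s + s₀) (t + t₀) + G s t := by
  intro s t s₀ t₀ hs ht hs₀ ht₀
  lift s to NNReal using hs
  lift t to NNReal using ht
  lift s₀ to NNReal using hs₀
  lift t₀ to NNReal using ht₀
  exact main_nn d hd H hmono hne hlim G hG0 hineq s t s₀ t₀

end
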